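/- Let 1 ≤ p < ∞ and ψ an Orlicz function. Then ψ is equivalent for small arguments to a p-convex Orlicz function (i.e., one for which t ↦ ψ(t^{1/p}) is convex) if and only if there exists C > 0 such that ψ(st) ≤ C s^p ψ(t) for all 0 < s, t ≤ 1. Dually, ψ is equivalent for small arguments to a p-concave Orlicz function if and only if there exists C > 0 with s^p ψ(t) ≤ C ψ(st) for all 0 < s, t ≤ 1. -/

import Mathlib

open Set

/-- An Orlicz function: increasing, convex, continuous on `[0,∞)`, vanishing at `0`. -/
def IsOrlicz (M : ℝ → ℝ) : Prop :=
  StrictMonoOn M (Ici (0:ℝ)) ∧ ConvexOn ℝ (Ici (0:ℝ)) M ∧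
    ContinuousOn M (Ici (0:ℝ)) ∧ M 0 = 0

/-- Two functions are equivalent for small values of the argument. -/
def EquivSmall (f g : ℝ → ℝ) : Prop :=
  ∃ C t₀ : ℝ, 0 < C ∧ 0 < t₀ ∧
    ∀ t : ℝ, 0 < t → t ≤ t₀ → f t ≤ C * g t ∧ g t ≤ C * f t

lemma orl_nonneg {ψ : ℝ → ℝ} (h : IsOrlicz ψ) {t : ℝ} (ht : 0 ≤ t) : 0 ≤ ψ t := by
  have := h.1.monotoneOn (mem_Ici.2 le_rfl) (mem_Ici.2 ht) ht
  rwa [h.2.2.2] at this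

lemma orl_pos {ψ : ℝ → ℝ} (h : IsOrlicz ψ) {t : ℝ} (ht : 0 < t) : 0 < ψ t := by
  have := h.1 (mem_Ici.2 le_rfl) (mem_Ici.2 ht.le) ht
  rwa [h.2.2.2] at this

lemma orl_mono {ψ : ℝ → ℝ} (h : IsOrlicz ψ) {s t : ℝ} (hs : 0 ≤ s) (ht : s ≤ t) : ψ s ≤ ψ t :=
  h.1.monotoneOn (mem_Ici.2 hs) (mem_Ici.2 (hs.trans ht)) ht

lemma cvx_scale {f : ℝ → ℝ} (h : ConvexOn ℝ (Ici (0:ℝ)) f) (h0 : f 0 = 0) {c t : ℝ}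
    (hc : 0 ≤ c) (hc1 : c ≤ 1) (ht : 0 ≤ t) : f (c * t) ≤ c * f t := by
  have := h.2 (mem_Ici.2 ht) (mem_Ici.2 (le_refl (0:ℝ))) hc (sub_nonneg.2 hc1) (by ring)
  simpa [h0] using this

lemma ccv_scale {f : ℝ → ℝ} (h : ConcaveOn ℝ (Ici (0:ℝ)) f) (h0 : f 0 = 0) {c t : ℝ}
    (hc : 0 ≤ c) (hc1 : c ≤ 1) (ht : 0 ≤ t) : c * f t ≤ f (c * t) := by
  have := h.2 (mem_Ici.2 ht) (mem_Ici.2 (le_refl (0:ℝ))) hc (sub_nonneg.2 hc1) (by ring)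
  simpa [h0] using this

lemma pw {p t : ℝ} (hp : 1 ≤ p) (ht : 0 ≤ t) : (t ^ p) ^ (1 / p) = t := by
  rw [← Real.rpow_mul ht, mul_one_div_cancel (by linarith), Real.rpow_one]

lemma pw' {p t : ℝ} (hp : 1 ≤ p) (ht : 0 ≤ t) : (t ^ (1 / p)) ^ p = t := by
  rw [← Real.rpow_mul ht, one_div_mul_cancel (by linarith), Real.rpow_one]

lemma fwd1 (p : ℝ) (hp : 1 ≤ p) (ψ : ℝ → ℝ) (hψ : IsOrlicz ψ)
    (h : ∃ φ : ℝ → ℝ, IsOrlicz φ ∧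
        ConvexOn ℝ (Ici (0:ℝ)) (fun t => φ (t ^ (1 / p))) ∧ EquivSmall ψ φ) :
    ∃ C : ℝ, 0 < C ∧
        ∀ s ∈ Ioc (0:ℝ) 1, ∀ t ∈ Ioc (0:ℝ) 1, ψ (s * t) ≤ C * s ^ p * ψ t := by
  obtain ⟨φ, hφ, hc, C, t₀, hC, ht₀, hE⟩ := h
  have hp0 : (0:ℝ) < p := by linarith
  have hz : (fun t : ℝ => φ (t ^ (1 / p))) 0 = 0 := by
    simp [Real.zero_rpow (inv_ne_zero hp0.ne'), hφ.2.2.2]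
  have key : ∀ s t : ℝ, 0 < s → s ≤ 1 → 0 < t → t ≤ t₀ → ψ (s * t) ≤ C ^ 2 * s ^ p * ψ t := by
    intro s t hs hs1 ht ht1
    have h1 := cvx_scale hc hz (Real.rpow_nonneg hs.le p) (Real.rpow_le_one hs.le hs1 hp0.le)
      (Real.rpow_nonneg ht.le p)
    simp only [← Real.mul_rpow hs.le ht.le, pw hp ht.le, pw hp (mul_pos hs ht).le] at h1
    have h2 := (hE (s * t) (mul_pos hs ht) (by nlinarith)).1
    have h3 := (hE t ht ht1).2
    have hsp := Real.rpow_pos_of_pos hs p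
    calc ψ (s * t) ≤ C * φ (s * t) := h2
      _ ≤ C * (s ^ p * (C * ψ t)) := by gcongr; exact h1.trans (by gcongr)
      _ = _ := by ring
  set D := max 1 (C ^ 2) with hD
  have hD1 : 1 ≤ D := le_max_left _ _
  have hD2 : C ^ 2 ≤ D := le_max_right _ _
  have ht0p := Real.rpow_pos_of_pos ht₀ p
  refine ⟨max D (D / t₀ ^ p), by positivity, ?_⟩
  rintro s ⟨hs, hs1⟩ t ⟨ht, ht1⟩
  have hsp := Real.rpow_pos_of_pos hs p
  have hψt := orl_pos hψ ht
  rcases le_total t t₀ with h | h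
  · refine (key s t hs hs1 ht h).trans ?_
    gcongr
    exact hD2.trans (le_max_left _ _)
  · suffices ψ (s * t) ≤ D / t₀ ^ p * s ^ p * ψ t by
      refine this.trans ?_
      gcongr
      exact le_max_right _ _
    have hst : (s * t) ^ p ≤ s ^ p := by
      apply Real.rpow_le_rpow (by positivity) (by nlinarith) hp0.le
    rcases le_total (s * t) t₀ with h' | h'
    · have := key (s * t / t₀) t₀ (by positivity) ((div_le_one ht₀).2 h') ht₀ le_rfl
      rw [div_mul_cancel₀ _ ht₀.ne', Real.div_rpow (by positivity) ht₀.le] at this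
      have hψ0 := orl_pos hψ ht₀
      calc _ ≤ _ := this
        _ ≤ D * (s ^ p / t₀ ^ p) * ψ t := by
          gcongr
          exact orl_mono hψ ht₀.le h
        _ = _ := by ring
    · have h1 : t₀ ^ p ≤ s ^ p := Real.rpow_le_rpow ht₀.le (by nlinarith) hp0.le
      have h2 : 1 ≤ D / t₀ ^ p * s ^ p := by
        rw [div_mul_eq_mul_div, one_le_div ht0p]; nlinarith
      have h3 := orl_mono hψ (mul_pos hs ht).le (show s * t ≤ t by nlinarith)
      nlinarith

lemma fwd2 (p : ℝ) (hp : 1 ≤ p) (ψ : ℝ → ℝ) (hψ : IsOrlicz ψ)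
    (h : ∃ φ : ℝ → ℝ, IsOrlicz φ ∧
        ConcaveOn ℝ (Ici (0:ℝ)) (fun t => φ (t ^ (1 / p))) ∧ EquivSmall ψ φ) :
    ∃ C : ℝ, 0 < C ∧
        ∀ s ∈ Ioc (0:ℝ) 1, ∀ t ∈ Ioc (0:ℝ) 1, s ^ p * ψ t ≤ C * ψ (s * t) := by
  obtain ⟨φ, hφ, hc, C, t₀, hC, ht₀, hE⟩ := h
  have hp0 : (0:ℝ) < p := by linarith
  have hz : (fun t : ℝ => φ (t ^ (1 / p))) 0 = 0 := by
    simp [Real.zero_rpow (inv_ne_zero hp0.ne'), hφ.2.2.2]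
  have key : ∀ s t : ℝ, 0 < s → s ≤ 1 → 0 < t → t ≤ t₀ → s ^ p * ψ t ≤ C ^ 2 * ψ (s * t) := by
    intro s t hs hs1 ht ht1
    have h1 := ccv_scale hc hz (Real.rpow_nonneg hs.le p) (Real.rpow_le_one hs.le hs1 hp0.le)
      (Real.rpow_nonneg ht.le p)
    simp only [← Real.mul_rpow hs.le ht.le, pw hp ht.le, pw hp (mul_pos hs ht).le] at h1
    have h2 := (hE (s * t) (mul_pos hs ht) (by nlinarith)).2
    have h3 := (hE t ht ht1).1
    have hsp := Real.rpow_pos_of_pos hs p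
    calc s ^ p * ψ t ≤ s ^ p * (C * φ t) := by gcongr
      _ = C * (s ^ p * φ t) := by ring
      _ ≤ C * (C * ψ (s * t)) := mul_le_mul_of_nonneg_left (h1.trans h2) hC.le
      _ = _ := by ring
  have hψ0 := orl_pos hψ ht₀
  have hψ1 := orl_pos hψ one_pos
  refine ⟨max (C ^ 2) (ψ 1 / ψ t₀ * C ^ 2), by positivity, ?_⟩
  rintro s ⟨hs, hs1⟩ t ⟨ht, ht1⟩
  have hsp := Real.rpow_pos_of_pos hs p
  have hψt := orl_pos hψ (mul_pos hs ht)
  rcases le_total t t₀ with h | h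
  · refine (key s t hs hs1 ht h).trans ?_
    gcongr
    exact le_max_left _ _
  · calc s ^ p * ψ t ≤ s ^ p * ψ 1 := by gcongr; exact orl_mono hψ ht.le ht1
      _ = ψ 1 / ψ t₀ * (s ^ p * ψ t₀) := by field_simp
      _ ≤ ψ 1 / ψ t₀ * (C ^ 2 * ψ (s * t)) := by
        refine mul_le_mul_of_nonneg_left ?_ (by positivity)
        refine (key s t₀ hs hs1 ht₀ le_rfl).trans ?_
        gcongr
        exact orl_mono hψ (by positivity) (by gcongr)
      _ = ψ 1 / ψ t₀ * C ^ 2 * ψ (s * t) := by ring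
      _ ≤ _ := by gcongr; exact le_max_right _ _

lemma supp_line {ψ : ℝ → ℝ} (h : ConvexOn ℝ (Ici (0:ℝ)) ψ) {x : ℝ} (hx : 0 < x) :
    ∃ a : ℝ, ∀ t, 0 ≤ t → ψ x + a * (t - x) ≤ ψ t := by
  have hne : (Set.image (fun s => (ψ x - ψ s) / (x - s)) (Ico 0 x)).Nonempty :=
    ⟨_, 0, ⟨le_rfl, hx⟩, rfl⟩
  have hub : ∀ t, x < t → (ψ t - ψ x) / (t - x) ∈
      upperBounds (Set.image (fun s => (ψ x - ψ s) / (x - s)) (Ico 0 x)) := by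
    rintro t ht _ ⟨s, hs, rfl⟩
    exact h.slope_mono_adjacent (mem_Ici.2 hs.1) (mem_Ici.2 (hx.trans ht).le) hs.2 ht
  refine ⟨sSup (Set.image (fun s => (ψ x - ψ s) / (x - s)) (Ico 0 x)), fun t ht => ?_⟩
  rcases lt_trichotomy t x with h1 | h1 | h1
  · have := le_csSup ⟨_, hub (x + 1) (by linarith)⟩ (mem_image_of_mem _ ⟨ht, h1⟩)
    rw [div_le_iff₀ (by linarith)] at this
    linarith
  · subst h1; simp
  · have := csSup_le hne (hub t h1)
    rw [le_div_iff₀ (by linarith)] at this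
    linarith

lemma pow_sec {p x : ℝ} (hp : 1 ≤ p) (h1 : 1 ≤ x) (h2 : x ≤ 2) :
    x ^ p - 1 ≤ 2 ^ p * (x - 1) := by
  have := (convexOn_rpow hp).2 (mem_Ici.2 (zero_le_one' ℝ)) (mem_Ici.2 (zero_le_two (α := ℝ)))
    (show 0 ≤ 2 - x by linarith) (show 0 ≤ x - 1 by linarith) (by ring)
  simp only [smul_eq_mul, Real.one_rpow] at this
  rw [show (2 - x) * 1 + (x - 1) * 2 = x by ring] at this
  linarith

lemma bwd1 (p : ℝ) (hp : 1 ≤ p) (ψ : ℝ → ℝ) (hψ : IsOrlicz ψ)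
    (h : ∃ C : ℝ, 0 < C ∧
        ∀ s ∈ Ioc (0:ℝ) 1, ∀ t ∈ Ioc (0:ℝ) 1, ψ (s * t) ≤ C * s ^ p * ψ t) :
    ∃ φ : ℝ → ℝ, IsOrlicz φ ∧
        ConvexOn ℝ (Ici (0:ℝ)) (fun t => φ (t ^ (1 / p))) ∧ EquivSmall ψ φ := by
  obtain ⟨C, hC, hC'⟩ := h
  have hp0 : (0:ℝ) < p := by linarith
  have h2p : (1:ℝ) ≤ 2 ^ p := Real.one_le_rpow (by norm_num) hp0.le
  have hψ1 := orl_pos hψ one_pos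
  have ha : ∀ x : Ioc (0:ℝ) (1/2), ∃ a : ℝ, ∀ t, 0 ≤ t → ψ x + a * (t - x) ≤ ψ t :=
    fun x => supp_line hψ.2.1 x.2.1
  choose a ha using ha
  have ha0 : ∀ x, 0 ≤ a x := by
    intro x
    have h1 := ha x 0 le_rfl
    rw [hψ.2.2.2] at h1
    have h2 := orl_pos hψ x.2.1
    have h3 := x.2.1
    by_contra h4
    push Not at h4
    nlinarith
  have hax : ∀ x, a x * x ≤ ψ (2 * x) := by
    intro x
    have h1 := ha x (2 * x) (by linarith [x.2.1])
    have h2 := orl_pos hψ x.2.1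
    linarith
  set L := C * 2 ^ p * ψ 1 with hL
  have hL0 : 0 < L := by positivity
  set H : Ioc (0:ℝ) (1/2) → ℝ → ℝ := fun x u => max 0 (ψ x + a x * x * (u / (x:ℝ) ^ p - 1)) with hH
  have hslope : ∀ x : Ioc (0:ℝ) (1/2), a x * x / (x:ℝ) ^ p ≤ L := by
    intro x
    have hx := x.2.1
    have h1 := hC' (2 * x) ⟨by linarith, by linarith [x.2.2]⟩ 1 ⟨one_pos, le_rfl⟩
    rw [mul_one, Real.mul_rpow (by norm_num) hx.le] at h1
    rw [div_le_iff₀ (Real.rpow_pos_of_pos hx p), hL]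
    linarith [hax x]
  have hHmono : ∀ x u v, u ≤ v → H x u ≤ H x v := by
    intro x u v huv
    have hx := x.2.1
    have := ha0 x
    simp only [hH]
    gcongr
  have hHlip : ∀ x u v, H x u ≤ H x v + L * |u - v| := by
    intro x u v
    have hx := x.2.1
    have h0 : 0 ≤ a x * x / (x:ℝ) ^ p := by have := ha0 x; positivity
    have h1 : a x * x / (x:ℝ) ^ p * (u - v) ≤ L * |u - v| :=
      (mul_le_mul_of_nonneg_left (le_abs_self _) h0).trans
        (mul_le_mul_of_nonneg_right (hslope x) (abs_nonneg _))
    simp only [hH]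
    apply max_le
    · have := le_max_left 0 (ψ x + a x * x * (v / (x:ℝ) ^ p - 1))
      positivity
    · have := le_max_right 0 (ψ x + a x * x * (v / (x:ℝ) ^ p - 1))
      have e : ψ x + a x * x * (u / (x:ℝ) ^ p - 1) = ψ x + a x * x * (v / (x:ℝ) ^ p - 1)
        + a x * x / (x:ℝ) ^ p * (u - v) := by ring
      linarith
  have hH0 : ∀ x, H x 0 = 0 := by
    intro x
    have h1 := ha x 0 le_rfl
    rw [hψ.2.2.2] at h1
    simp only [hH]
    apply max_eq_left
    rw [zero_div]
    linarith
  have hbdd : ∀ u, BddAbove (range fun x => H x u) := by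
    intro u
    refine ⟨L * |u|, ?_⟩
    rintro _ ⟨x, rfl⟩
    have := hHlip x u 0
    rw [hH0] at this
    simpa using this
  have : Nonempty (Ioc (0:ℝ) (1/2)) := ⟨⟨1/2, by norm_num, le_rfl⟩⟩
  set Φ : ℝ → ℝ := fun u => ⨆ x, H x u with hΦ
  have hle : ∀ x u, H x u ≤ Φ u := fun x u => le_ciSup (hbdd u) x
  have hΦmono : ∀ u v, u ≤ v → Φ u ≤ Φ v := fun u v huv =>
    ciSup_le fun x => (hHmono x u v huv).trans (hle x v)
  have hΦlip : LipschitzWith L.toNNReal Φ := by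
    apply LipschitzWith.of_le_add_mul
    intro u v
    rw [Real.coe_toNNReal _ hL0.le, Real.dist_eq]
    exact ciSup_le fun x => (hHlip x u v).trans (by linarith [hle x v])
  have hΦ0 : Φ 0 = 0 := by simp [hΦ, hH0]
  have hΦnn : ∀ u, 0 ≤ Φ u := fun u => (le_max_left _ _).trans (hle (Classical.arbitrary _) u)
  have hΦc : ∀ u v α β : ℝ, 0 ≤ α → 0 ≤ β → α + β = 1 →
      Φ (α * u + β * v) ≤ α * Φ u + β * Φ v := by
    intro u v α β hα hβ hαβ
    refine ciSup_le fun x => ?_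
    have h1 := mul_le_mul_of_nonneg_left (hle x u) hα
    have h2 := mul_le_mul_of_nonneg_left (hle x v) hβ
    refine le_trans ?_ (add_le_add h1 h2)
    simp only [hH]
    have h3 := mul_le_mul_of_nonneg_left (le_max_right 0 (ψ x + a x * x * (u / (x:ℝ) ^ p - 1))) hα
    have h4 := mul_le_mul_of_nonneg_left (le_max_right 0 (ψ x + a x * x * (v / (x:ℝ) ^ p - 1))) hβ
    apply max_le
    · have := le_max_left 0 (ψ x + a x * x * (v / (x:ℝ) ^ p - 1))
      have := le_max_left 0 (ψ x + a x * x * (u / (x:ℝ) ^ p - 1))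
      positivity
    · refine le_trans (le_of_eq ?_) (add_le_add h3 h4)
      obtain rfl : β = 1 - α := by linarith
      ring
  have hlow : ∀ t, 0 < t → t ≤ 1/2 → ψ t ≤ Φ (t ^ p) := by
    intro t ht ht1
    refine le_trans ?_ (hle ⟨t, ht, ht1⟩ (t ^ p))
    refine le_trans ?_ (le_max_right _ _)
    simp only
    rw [div_self (Real.rpow_pos_of_pos ht p).ne']
    simp
  have hup : ∀ t, 0 < t → t ≤ 1/2 → Φ (t ^ p) ≤ (1 + 2 ^ p + C * 2 ^ p) * ψ t := by
    intro t ht ht1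
    have hψt := orl_pos hψ ht
    refine ciSup_le fun x => max_le (by positivity) ?_
    have hx := x.2.1
    have hψx := orl_pos hψ hx
    have hax0 : 0 ≤ a x * x := mul_nonneg (ha0 x) hx.le
    rw [← Real.div_rpow ht.le hx.le]
    have hline := ha x t ht.le
    have e : a x * (t - x) = a x * x * (t / x - 1) := by field_simp
    rw [e] at hline
    have hA : 0 ≤ C * 2 ^ p * ψ t := by positivity
    have hB : 0 ≤ 2 ^ p * ψ t := by positivity
    rcases le_total t x with h1 | h1
    · have h2 : (t / x) ^ p ≤ t / x := by
        have := Real.rpow_le_rpow_of_exponent_ge (show 0 < t / x by positivity)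
          ((div_le_one hx).2 h1) hp
        rwa [Real.rpow_one] at this
      have h3 := mul_le_mul_of_nonneg_left (sub_le_sub_right h2 1) hax0
      nlinarith
    rcases le_total t (2 * x) with h2 | h2
    · have h3 := mul_le_mul_of_nonneg_left (pow_sec hp ((one_le_div hx).2 h1)
        ((div_le_iff₀ hx).2 h2)) hax0
      have h4 := mul_le_mul_of_nonneg_left hline (zero_le_one.trans h2p)
      nlinarith
    · have h3 := hC' (2 * x / t) ⟨by positivity, (div_le_one ht).2 h2⟩ t ⟨ht, by linarith⟩
      rw [div_mul_cancel₀ _ ht.ne', Real.div_rpow (by positivity) ht.le,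
        Real.mul_rpow (by norm_num) hx.le] at h3
      have hxp := Real.rpow_pos_of_pos hx p
      have htp := Real.rpow_pos_of_pos ht p
      have h4 : a x * x * (t / x) ^ p ≤ C * 2 ^ p * ψ t := by
        calc a x * x * (t / x) ^ p ≤ (C * (2 ^ p * (x:ℝ) ^ p / t ^ p) * ψ t) * (t / x) ^ p := by
              exact mul_le_mul_of_nonneg_right ((hax x).trans h3) (by positivity)
          _ = _ := by
            rw [Real.div_rpow ht.le hx.le]
            field_simp
      have h5 := orl_mono hψ hx.le h1
      nlinarith
  have hφc : ConvexOn ℝ (Ici (0:ℝ)) (fun t => Φ (t ^ p)) := by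
    refine ⟨convex_Ici 0, fun u hu v hv α β hα hβ hαβ => ?_⟩
    have := (convexOn_rpow hp).2 hu hv hα hβ hαβ
    exact (hΦmono _ _ this).trans (hΦc _ _ _ _ hα hβ hαβ)
  have hφ0 : (fun t : ℝ => Φ (t ^ p)) 0 = 0 := by simp [Real.zero_rpow hp0.ne', hΦ0]
  have hpos : ∀ t, 0 < t → 0 < Φ (t ^ p) := by
    intro t ht
    have h1 : 0 < min t (1/2) := by positivity
    refine (orl_pos hψ h1).trans_le ((hlow _ h1 (min_le_right _ _)).trans (hΦmono _ _ ?_))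
    exact Real.rpow_le_rpow h1.le (min_le_left _ _) hp0.le
  refine ⟨fun t => Φ (t ^ p), ⟨?_, hφc, ?_, hφ0⟩, ?_, ?_⟩
  · intro s hs t ht hst
    have hs' : 0 ≤ s := hs
    have ht' : 0 < t := hs'.trans_lt hst
    have := cvx_scale hφc hφ0 (show 0 ≤ s / t by positivity) ((div_le_one ht').2 hst.le) ht'.le
    rw [div_mul_cancel₀ _ ht'.ne'] at this
    refine this.trans_lt ?_
    have h1 := (div_lt_one ht').2 hst
    have := hpos t ht'
    simp only
    nlinarith
  · apply Continuous.continuousOn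
    exact hΦlip.continuous.comp (Real.continuous_rpow_const hp0.le)
  · refine ⟨convex_Ici 0, fun u hu v hv α β hα hβ hαβ => ?_⟩
    have hw := (convex_Ici (0:ℝ)) hu hv hα hβ hαβ
    simp only [pw' hp (mem_Ici.1 hu), pw' hp (mem_Ici.1 hv), pw' hp (mem_Ici.1 hw)]
    exact hΦc _ _ _ _ hα hβ hαβ
  · refine ⟨1 + 2 ^ p + C * 2 ^ p, 1/2, by positivity, by norm_num, fun t ht ht1 => ⟨?_, hup t ht ht1⟩⟩
    have := hlow t ht ht1
    have h2 := hpos t ht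
    have : 0 ≤ (2 ^ p + C * 2 ^ p) * Φ (t ^ p) := by positivity
    simp only
    nlinarith

lemma bwd2 (p : ℝ) (hp : 1 ≤ p) (ψ : ℝ → ℝ) (hψ : IsOrlicz ψ)
    (h : ∃ C : ℝ, 0 < C ∧
        ∀ s ∈ Ioc (0:ℝ) 1, ∀ t ∈ Ioc (0:ℝ) 1, s ^ p * ψ t ≤ C * ψ (s * t)) :
    ∃ φ : ℝ → ℝ, IsOrlicz φ ∧
        ConcaveOn ℝ (Ici (0:ℝ)) (fun t => φ (t ^ (1 / p))) ∧ EquivSmall ψ φ := by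
  obtain ⟨C, hC, hC'⟩ := h
  have hp0 : (0:ℝ) < p := by linarith
  have hq : 0 ≤ p - 1 := by linarith
  have hψ1 := orl_pos hψ one_pos
  set K : Ioc (0:ℝ) 1 → ℝ → ℝ :=
    fun x t => ψ x / x * min 1 ((max t 0 / (x:ℝ)) ^ (p - 1)) with hK
  have hg0 : ∀ x : Ioc (0:ℝ) 1, 0 < ψ x / x := fun x => div_pos (orl_pos hψ x.2.1) x.2.1
  have hg1 : ∀ x y : ℝ, 0 < x → x ≤ y → ψ x / x ≤ ψ y / y := by
    intro x y hx hxy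
    have hy := hx.trans_le hxy
    have := cvx_scale hψ.2.1 hψ.2.2.2 (show 0 ≤ x / y by positivity) ((div_le_one hy).2 hxy) hy.le
    rw [div_mul_cancel₀ _ hy.ne'] at this
    rw [div_le_iff₀ hx]
    calc _ ≤ _ := this
      _ = _ := by ring
  have hKnn : ∀ x t, 0 ≤ K x t := by
    intro x t
    have := hg0 x
    have := x.2.1
    simp only [hK]
    positivity
  have hKmono : ∀ x s t, s ≤ t → K x s ≤ K x t := by
    intro x s t hst
    have := hg0 x
    have := x.2.1
    simp only [hK]
    gcongr
  have hKle : ∀ x t, K x t ≤ ψ x / x := by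
    intro x t
    exact mul_le_of_le_one_right (hg0 x).le (min_le_left _ _)
  have hbdd : ∀ t, BddAbove (range fun x => K x t) := by
    intro t
    refine ⟨ψ 1 / 1, ?_⟩
    rintro _ ⟨x, rfl⟩
    exact (hKle x t).trans (hg1 x 1 x.2.1 x.2.2)
  have : Nonempty (Ioc (0:ℝ) 1) := ⟨⟨1, by norm_num, le_rfl⟩⟩
  set b : ℝ → ℝ := fun t => ⨆ x, K x t with hb
  have hle : ∀ x t, K x t ≤ b t := fun x t => le_ciSup (hbdd t) x
  have hbmono : Monotone b := fun s t hst =>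
    ciSup_le fun x => (hKmono x s t hst).trans (hle x t)
  have hbnn : ∀ t, 0 ≤ b t := fun t => (hKnn (Classical.arbitrary _) t).trans (hle _ t)
  have hblow : ∀ t, 0 < t → t ≤ 1 → ψ t / t ≤ b t := by
    intro t ht ht1
    refine le_trans ?_ (hle ⟨t, ht, ht1⟩ t)
    simp [hK, max_eq_left ht.le, div_self ht.ne']
  have hbpos : ∀ t, 0 < t → 0 < b t := by
    intro t ht
    have h1 : 0 < min t 1 := by positivity
    exact (div_pos (orl_pos hψ h1) h1).trans_le ((hblow _ h1 (min_le_right _ _)).trans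
      (hbmono (min_le_left _ _)))
  have hbup : ∀ t, 0 < t → t ≤ 1 → b t ≤ (1 + C) * (ψ t / t) := by
    intro t ht ht1
    have hψt := orl_pos hψ ht
    have hgt : 0 < ψ t / t := by positivity
    refine ciSup_le fun x => ?_
    have hx := x.2.1
    rcases le_total (x:ℝ) t with h1 | h1
    · have := (hKle x t).trans (hg1 x t hx h1)
      nlinarith
    · have h2 : K x t ≤ ψ x / x * (t / x) ^ (p - 1) := by
        simp only [hK, max_eq_left ht.le]
        have := hg0 x
        gcongr
        exact min_le_right _ _
      have h3 := hC' (t / x) ⟨by positivity, (div_le_one hx).2 h1⟩ x x.2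
      rw [div_mul_cancel₀ _ hx.ne'] at h3
      have h4 : (t / x) ^ p = (t / x) ^ (p - 1) * (t / x) := by
        rw [← Real.rpow_add_one (by positivity)]; congr 1; ring
      have h5 : ψ x / x * (t / x) ^ (p - 1) = ((t / x) ^ p * ψ x) / t := by
        rw [h4]; field_simp
      rw [h5] at h2
      have h6 : ((t / x) ^ p * ψ x) / t ≤ C * ψ t / t := by gcongr
      have h7 : C * ψ t / t = C * (ψ t / t) := by ring
      linarith
  have hbq : ∀ s t, 0 < s → s ≤ t → b t ≤ (t / s) ^ (p - 1) * b s := by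
    intro s t hs hst
    have ht := hs.trans_le hst
    have hts : 1 ≤ (t / s) ^ (p - 1) := Real.one_le_rpow ((one_le_div hs).2 hst) hq
    refine ciSup_le fun x => ?_
    have hx := x.2.1
    refine le_trans ?_ (mul_le_mul_of_nonneg_left (hle x s) (by positivity))
    simp only [hK, max_eq_left ht.le, max_eq_left hs.le]
    rw [mul_left_comm]
    refine mul_le_mul_of_nonneg_left ?_ (hg0 x).le
    rw [mul_min_of_nonneg _ _ (by positivity), ← Real.mul_rpow (by positivity) (by positivity),
      show t / s * (s / x) = t / x by field_simp, mul_one]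
    exact min_le_min hts le_rfl
  have hbanti : ∀ s t, 0 < s → s ≤ t → b t / t ^ (p - 1) ≤ b s / s ^ (p - 1) := by
    intro s t hs hst
    have ht := hs.trans_le hst
    have h1 := hbq s t hs hst
    have hsp := Real.rpow_pos_of_pos hs (p - 1)
    rw [div_le_iff₀ (Real.rpow_pos_of_pos ht _)]
    rw [Real.div_rpow ht.le hs.le] at h1
    calc _ ≤ _ := h1
      _ = _ := by ring
  have hbcont : ∀ t, 0 < t → ContinuousAt b t := by
    intro t ht
    have hf : ∀ f : ℝ → ℝ, ContinuousAt f t → f t = 1 → Filter.Tendsto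
        (fun s => f s ^ (p - 1) * b t) (nhds t) (nhds (b t)) := by
      intro f hfc hft
      have : ContinuousAt (fun s => f s ^ (p - 1) * b t) t :=
        (hfc.rpow_const (Or.inr hq)).mul continuousAt_const
      have h2 := this.tendsto
      simpa [hft] using h2
    have h1 := hf (fun s => min 1 (s / t)) (by fun_prop) (by simp [ht.ne'])
    have h2 := hf (fun s => max 1 (s / t)) (by fun_prop) (by simp [ht.ne'])
    refine tendsto_of_tendsto_of_tendsto_of_le_of_le' h1 h2 ?_ ?_
    · filter_upwards [eventually_gt_nhds ht] with s hs
      rcases le_total s t with h | h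
      · rw [min_eq_right ((div_le_one ht).2 h)]
        refine (mul_le_mul_of_nonneg_left (hbq s t hs h) (by positivity)).trans ?_
        rw [← mul_assoc, ← Real.mul_rpow (by positivity) (by positivity),
          show s / t * (t / s) = 1 by field_simp]
        simp
      · rw [min_eq_left ((one_le_div ht).2 h)]
        simpa using hbmono h
    · filter_upwards [eventually_gt_nhds ht] with s hs
      rcases le_total s t with h | h
      · rw [max_eq_left ((div_le_one ht).2 h)]
        simpa using hbmono h
      · rw [max_eq_right ((one_le_div ht).2 h)]
        exact hbq t s ht h
  have hint : ∀ x y, IntervalIntegrable b MeasureTheory.volume x y :=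
    fun x y => hbmono.intervalIntegrable
  set φ : ℝ → ℝ := fun t => ∫ x in (0:ℝ)..t, b x with hφ
  have hφcont : Continuous φ := intervalIntegral.continuous_primitive hint 0
  have hφ0 : φ 0 = 0 := by simp [hφ]
  have hφd : ∀ t, 0 < t → HasDerivAt φ (b t) t := by
    intro t ht
    exact intervalIntegral.integral_hasDerivAt_right (hint 0 t)
      (hbmono.measurable.stronglyMeasurable.stronglyMeasurableAtFilter) (hbcont t ht)
  have hsm : StrictMonoOn φ (Ici 0) := by
    refine strictMonoOn_of_deriv_pos (convex_Ici 0) hφcont.continuousOn fun t ht => ?_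
    rw [interior_Ici] at ht
    rw [(hφd t ht).deriv]
    exact hbpos t ht
  have hφnn : ∀ t, 0 < t → 0 < φ t := by
    intro t ht
    have := hsm (mem_Ici.2 le_rfl) (mem_Ici.2 ht.le) ht
    rwa [hφ0] at this
  refine ⟨φ, ⟨hsm, ?_, hφcont.continuousOn, hφ0⟩, ?_, ?_⟩
  · refine MonotoneOn.convexOn_of_deriv (convex_Ici 0) hφcont.continuousOn ?_ ?_
    · rw [interior_Ici]
      exact fun t ht => (hφd t ht).differentiableAt.differentiableWithinAt
    · rw [interior_Ici]
      intro s hs t ht hst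
      rw [(hφd t ht).deriv, (hφd s hs).deriv]
      exact hbmono hst
  · have hd : ∀ u : ℝ, 0 < u → HasDerivAt (fun t => φ (t ^ (1 / p)))
        (b (u ^ (1 / p)) / (u ^ (1 / p)) ^ (p - 1) * (1 / p)) u := by
      intro u hu
      have h1 := (hφd (u ^ (1 / p)) (Real.rpow_pos_of_pos hu _)).comp u
        (Real.hasDerivAt_rpow_const (p := 1 / p) (Or.inl hu.ne'))
      refine h1.congr_deriv ?_
      rw [← Real.rpow_mul hu.le, show 1 / p * (p - 1) = -(1 / p - 1) by field_simp; ring,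
        Real.rpow_neg hu.le]
      rw [div_inv_eq_mul]
      ring
    refine AntitoneOn.concaveOn_of_deriv (convex_Ici 0) ?_ ?_ ?_
    · exact (hφcont.comp (Real.continuous_rpow_const (by positivity))).continuousOn
    · rw [interior_Ici]
      exact fun t ht => (hd t ht).differentiableAt.differentiableWithinAt
    · rw [interior_Ici]
      intro s hs t ht hst
      rw [(hd t ht).deriv, (hd s hs).deriv]
      have h0 : (0:ℝ) < s := hs
      gcongr ?_ * _
      exact hbanti _ _ (Real.rpow_pos_of_pos hs _) (Real.rpow_le_rpow h0.le hst (by positivity))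
  · have hA : ∀ t, 0 < t → t ≤ 1 → φ t ≤ (1 + C) * ψ t := by
      intro t ht ht1
      have h1 : φ t ≤ ∫ x in (0:ℝ)..t, b t :=
        intervalIntegral.integral_mono_on ht.le (hint 0 t) (by simp) fun x hx => hbmono hx.2
      rw [intervalIntegral.integral_const, smul_eq_mul, sub_zero] at h1
      have h2 := mul_le_mul_of_nonneg_left (hbup t ht ht1) ht.le
      have h3 : t * ((1 + C) * (ψ t / t)) = (1 + C) * ψ t := by field_simp
      linarith
    have hB : ∀ t, 0 < t → t ≤ 1 → ψ t ≤ 2 ^ p * C * φ t := by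
      intro t ht ht1
      have h1 : ∫ x in (t/2)..t, b (t/2) ≤ ∫ x in (t/2)..t, b x :=
        intervalIntegral.integral_mono_on (by linarith) (by simp) (hint _ _) fun x hx => hbmono hx.1
      rw [intervalIntegral.integral_const, smul_eq_mul] at h1
      have h2 : φ (t/2) + ∫ x in (t/2)..t, b x = φ t :=
        intervalIntegral.integral_add_adjacent_intervals (hint _ _) (hint _ _)
      have h3 := (hφnn (t/2) (by linarith)).le
      have h4 := hblow (t/2) (by linarith) (by linarith)
      have h5 : ψ (t/2) ≤ φ t := by
        rw [div_le_iff₀ (by linarith)] at h4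
        nlinarith
      have h6 := hC' (1/2) (by norm_num) t ⟨ht, ht1⟩
      rw [show 1/2 * t = t/2 by ring, Real.div_rpow (by norm_num) (by norm_num), Real.one_rpow,
        one_div_mul_eq_div, div_le_iff₀ (by positivity)] at h6
      calc ψ t ≤ C * ψ (t/2) * 2 ^ p := h6
        _ ≤ C * φ t * 2 ^ p := by gcongr
        _ = _ := by ring
    refine ⟨max (1 + C) (2 ^ p * C), 1, by positivity, one_pos, fun t ht ht1 => ⟨?_, ?_⟩⟩
    · have := hφnn t ht
      refine (hB t ht ht1).trans ?_
      gcongr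
      exact le_max_right _ _
    · have := orl_pos hψ ht
      refine (hA t ht ht1).trans ?_
      gcongr
      exact le_max_left _ _

/-- For `1 ≤ p < ∞` and an Orlicz function `ψ`: `ψ` is equivalent for small arguments
to a `p`-convex Orlicz function iff `ψ(st) ≤ C s^p ψ(t)` for all `0 < s,t ≤ 1`;
dually, `ψ` is equivalent for small arguments to a `p`-concave Orlicz function iff
`s^p ψ(t) ≤ C ψ(st)` for all `0 < s,t ≤ 1`. -/
theorem stmt10 (p : ℝ) (hp : 1 ≤ p) (ψ : ℝ → ℝ) (hψ : IsOrlicz ψ) :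
    ((∃ φ : ℝ → ℝ, IsOrlicz φ ∧
        ConvexOn ℝ (Ici (0:ℝ)) (fun t => φ (t ^ (1 / p))) ∧ EquivSmall ψ φ) ↔
      (∃ C : ℝ, 0 < C ∧
        ∀ s ∈ Ioc (0:ℝ) 1, ∀ t ∈ Ioc (0:ℝ) 1, ψ (s * t) ≤ C * s ^ p * ψ t)) ∧
    ((∃ φ : ℝ → ℝ, IsOrlicz φ ∧
        ConcaveOn ℝ (Ici (0:ℝ)) (fun t => φ (t ^ (1 / p))) ∧ EquivSmall ψ φ) ↔
      (∃ C : ℝ, 0 < C ∧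
        ∀ s ∈ Ioc (0:ℝ) 1, ∀ t ∈ Ioc (0:ℝ) 1, s ^ p * ψ t ≤ C * ψ (s * t))) := by
  exact ⟨⟨fwd1 p hp ψ hψ, bwd1 p hp ψ hψ⟩, ⟨fwd2 p hp ψ hψ, bwd2 p hp ψ hψ⟩⟩
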